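/- For every integer b ≥ 3 and every sign sequence ε ∈ {1,-1}^(b-1), the Kauffman bracket polynomial F_b(ε₁,…,ε_{b-1}) equals the sum, over all admissible tilings of the positions 1,…,b-1, of the value of the tiling. (This is the expansion theorem for Kauffman bracket polynomials of the 2-bridge Chebyshev diagrams T(3,b); it has far fewer terms than the 2^(b-1) terms of the skein-relation expansion.) -/

import Mathlib

/-!
The recurrence for `F` is that of a continuant: with `a_p = a(ε_p)` and
`h_p = a(-ε_p)·f₂(-ε_{p-1})` it reads `F_{p+1} = a_p F_p + h_p F_{p-1}`. Hence (`F_split`)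
`F_{3+k} = F₃ · K(3, k) + h₃ F₂ · K(4, k-1)`, where `K(p, n)` (`cont`) is the continuant on the
`n` positions starting at `p`. The coefficients `F₃` and `h₃ F₂` are the values of the initial
blocks `S₂` and `S₁H`.

It remains to see that `K(p, n)` is the sum over all ways to continue the tiling on those
positions (`sum_tails`). Expanding `K(p, n) = a_p K(p+1, n-1) + h_{p+1} K(p+2, n-2)` once more in
its first term gives
`K(p, n) = (a_p a_{p+1} + h_{p+1}) K(p+2, n-2) + a_p h_{p+2} K(p+3, n-3)`,
and the two coefficients are the values of the blocks `C` and `VH`. The final block `V`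
comes from `K(p, 1) = a_p`.
-/

open LaurentPolynomial

noncomputable section

/-- The ring `ℤ[A, A⁻¹]` of Laurent polynomials over `ℤ`; the variable `A` is
`LaurentPolynomial.T 1`, and `A^n = T n` for `n : ℤ`. -/
abbrev KR : Type := LaurentPolynomial ℤ

/-- `a ε = A^ε`. -/
def Ca (ε : ℤ) : KR := T ε

/-- `f₂ ε = -A^(-3ε)`, the Kauffman bracket of `T(3,2)` with crossing sign `ε`. -/
def Cf₂ (ε : ℤ) : KR := -T (-3 * ε)

/-- The Kauffman bracket polynomial of the Chebyshev billiard table diagram `T(3,b)`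
with crossing signs `e 1, …, e (b-1)`. -/
def F : ℕ → (ℕ → ℤ) → KR
  | 0, _ => 1
  | 1, _ => 1
  | 2, e => Cf₂ (e 1)
  | m + 3, e =>
      Ca (e (m + 2)) * F (m + 2) e + Ca (-e (m + 2)) * Cf₂ (-e (m + 1)) * F (m + 1) e

/-- The types of tiles in the geometric interpretation. -/
inductive Block : Type
  | S2 | S1H | VH | C | V
  deriving DecidableEq

/-- The number of positions covered by each block. -/
def Block.size : Block → ℕ
  | .S2 => 2
  | .S1H => 3
  | .VH => 3
  | .C => 2
  | .V => 1

/-- An admissible tiling: first one initial block (`S₂` or `S₁H`), then a possibly empty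
sequence of middle blocks (`VH` or `C`), then optionally one final block `V`. -/
def IsAdmissible (l : List Block) : Prop :=
  ∃ (b₀ : Block) (mid tl : List Block),
    l = b₀ :: (mid ++ tl) ∧
    (b₀ = Block.S2 ∨ b₀ = Block.S1H) ∧
    (∀ b ∈ mid, b = Block.VH ∨ b = Block.C) ∧
    (tl = [] ∨ tl = [Block.V])

/-- The value of a block covering consecutive positions starting at position `p`,
computed from the signs `e p, e (p+1), …` at the positions it covers.
`S₂` has value `F₃(α,β)`; `S₁H` has value `f₂(α)·f₂(-β)·a(-γ)`;
`VH` has value `a(α)·f₂(-β)·a(-γ)`; `C` has value `a(α)·a(β) + f₂(-α)·a(-β)`;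
`V` has value `a(α)`. -/
def blockVal (e : ℕ → ℤ) (p : ℕ) : Block → KR
  | .S2 => Ca (e (p + 1)) * Cf₂ (e p) + Ca (-e (p + 1)) * Cf₂ (-e p)
  | .S1H => Cf₂ (e p) * Cf₂ (-e (p + 1)) * Ca (-e (p + 2))
  | .VH => Ca (e p) * Cf₂ (-e (p + 1)) * Ca (-e (p + 2))
  | .C => Ca (e p) * Ca (e (p + 1)) + Cf₂ (-e p) * Ca (-e (p + 1))
  | .V => Ca (e p)

/-- The value of a tiling starting at position `p`: the product of the values of its
blocks, each evaluated at the consecutive positions it covers. -/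
def tilingVal (e : ℕ → ℤ) : ℕ → List Block → KR
  | _, [] => 1
  | p, b :: rest => blockVal e p b * tilingVal e (p + b.size) rest

/-- A list of blocks that may follow the initial block of an admissible tiling. -/
def IsTail (l : List Block) : Prop :=
  ∃ mid tl : List Block, l = mid ++ tl ∧
    (∀ b ∈ mid, b = Block.VH ∨ b = Block.C) ∧ (tl = [] ∨ tl = [Block.V])

lemma isTail_nil : IsTail [] := ⟨[], [], by simp⟩

lemma isTail_cons (b : Block) (l : List Block) :
    IsTail (b :: l) ↔ ((b = Block.VH ∨ b = Block.C) ∧ IsTail l) ∨ (b = Block.V ∧ l = []) := by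
  constructor
  · rintro ⟨mid, tl, h, hm, ht⟩
    cases mid with
    | nil =>
      rcases ht with rfl | rfl
      · simp at h
      · right; simpa using h
    | cons c mid =>
      simp only [List.cons_append, List.cons.injEq] at h
      obtain ⟨rfl, rfl⟩ := h
      exact Or.inl ⟨hm _ (by simp), mid, tl, rfl, fun x hx => hm x (by simp [hx]), ht⟩
  · rintro (⟨hb, mid, tl, rfl, hm, ht⟩ | ⟨rfl, rfl⟩)
    · exact ⟨b :: mid, tl, rfl, by simpa using ⟨hb, hm⟩, ht⟩
    · exact ⟨[], [Block.V], by simp⟩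

lemma isAdmissible_iff (l : List Block) :
    IsAdmissible l ↔ ∃ b t, l = b :: t ∧ (b = Block.S2 ∨ b = Block.S1H) ∧ IsTail t := by
  constructor
  · rintro ⟨b, mid, tl, rfl, hb, hm, ht⟩
    exact ⟨b, _, rfl, hb, mid, tl, rfl, hm, ht⟩
  · rintro ⟨b, t, rfl, hb, mid, tl, rfl, hm, ht⟩
    exact ⟨b, mid, tl, rfl, hb, hm, ht⟩

/-- The finite set of tails covering exactly `n` positions, enumerated by first block. -/
def tails : ℕ → Finset (List Block)
  | 0 => {[]}
  | 1 => {[Block.V]}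
  | 2 => {[Block.C]}
  | n + 3 => (tails (n + 1)).image (List.cons Block.C) ∪ (tails n).image (List.cons Block.VH)

lemma mem_tails (n : ℕ) (l : List Block) :
    l ∈ tails n ↔ IsTail l ∧ (l.map Block.size).sum = n := by
  induction l generalizing n with
  | nil =>
    match n with
    | 0 | 1 | 2 => simp [tails, isTail_nil]
    | n + 3 => simp [tails]
  | cons b l ih =>
    -- the only list of blocks of total size `0` is the empty one
    have hnil : (l.map Block.size).sum = 0 ↔ l = [] := by
      cases l with
      | nil => simp
      | cons c l => cases c <;> simp [Block.size]
    match n with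
    | 0 => cases b <;> simp [tails, isTail_cons, Block.size]
    | 1 =>
      cases b <;> simp [tails, isTail_cons, Block.size]
      all_goals first | omega | (rintro rfl; simp)
    | 2 =>
      cases b <;> simp [tails, isTail_cons, Block.size]
      · omega
      · constructor
        · rintro rfl; exact ⟨isTail_nil, by simp⟩
        · rintro ⟨-, h⟩
          exact hnil.1 (by omega)
      · rintro rfl; simp
    | n + 3 =>
      have h1 : 2 + (l.map Block.size).sum = n + 3 ↔ (l.map Block.size).sum = n + 1 := by omega
      have h2 : 3 + (l.map Block.size).sum = n + 3 ↔ (l.map Block.size).sum = n := by omega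
      cases b <;> simp [tails, isTail_cons, Block.size, ih, h1, h2]
      rintro rfl; simp

/-- The weight `a(-ε_p)·f₂(-ε_{p-1})` of the second term of the recurrence for `F_{p+1}`. -/
def hVal (e : ℕ → ℤ) (p : ℕ) : KR := Ca (-e p) * Cf₂ (-e (p - 1))

/-- The continuant of the recurrence of `F`, on the `n` positions starting at `p`,
expanded from the left. -/
def cont (e : ℕ → ℤ) : ℕ → ℕ → KR
  | _, 0 => 1
  | p, 1 => Ca (e p)
  | p, n + 2 => Ca (e p) * cont e (p + 1) (n + 1) + hVal e (p + 1) * cont e (p + 2) n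

/-- The tails of length `n` starting at `p` sum to a continuant: unfolding the continuant
twice when `n ≥ 3` groups its terms into those starting with `C` and with `VH`. -/
lemma sum_tails (e : ℕ → ℤ) (n p : ℕ) : ∑ l ∈ tails n, tilingVal e p l = cont e p n := by
  induction n using Nat.strong_induction_on generalizing p with
  | _ n ih =>
    match n with
    | 0 => simp [tails, tilingVal, cont]
    | 1 => simp [tails, tilingVal, cont, blockVal]
    | 2 => simp [tails, tilingVal, cont, blockVal, hVal]; ring
    | n + 3 =>
      have hd : Disjoint ((tails (n + 1)).image (List.cons Block.C))
          ((tails n).image (List.cons Block.VH)) := by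
        rw [Finset.disjoint_left]
        intro l h1 h2
        simp only [Finset.mem_image] at h1 h2
        obtain ⟨x, -, rfl⟩ := h1
        obtain ⟨y, -, h⟩ := h2
        simp at h
      rw [tails, Finset.sum_union hd, Finset.sum_image (by simp), Finset.sum_image (by simp)]
      simp only [tilingVal, ← Finset.mul_sum, ih (n + 1) (by omega), ih n (by omega),
        Block.size, blockVal, cont, hVal, Nat.add_sub_cancel]
      simp only [add_assoc, Nat.reduceAdd]
      ring

lemma F_succ (e : ℕ → ℤ) (p : ℕ) :
    F (p + 3) e = Ca (e (p + 2)) * F (p + 2) e + hVal e (p + 2) * F (p + 1) e := by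
  simp [F, hVal]

/-- Splitting `F` at an intermediate index `p + 2`, as one splits a continuant. -/
lemma F_split (e : ℕ → ℤ) (n p : ℕ) :
    F (p + 2 + (n + 1)) e = F (p + 2) e * cont e (p + 2) (n + 1)
      + hVal e (p + 2) * F (p + 1) e * cont e (p + 3) n := by
  induction n generalizing p with
  | zero => simp only [zero_add, cont]; rw [F_succ]; ring
  | succ n ih =>
    have h := ih (p + 1)
    rw [show p + 2 + (n + 1 + 1) = p + 1 + 2 + (n + 1) by omega, h,
      show p + 1 + 2 = p + 3 by omega, show p + 1 + 1 = p + 2 by omega, F_succ, cont]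
    ring_nf

/-- The finite set of admissible tilings of `n + 2` positions. -/
def tilings : ℕ → Finset (List Block)
  | 0 => {[Block.S2]}
  | n + 1 => (tails (n + 1)).image (List.cons Block.S2) ∪ (tails n).image (List.cons Block.S1H)

lemma mem_tilings (n : ℕ) (l : List Block) :
    l ∈ tilings n ↔ IsAdmissible l ∧ (l.map Block.size).sum = n + 2 := by
  rw [isAdmissible_iff]
  match n with
  | 0 =>
    constructor
    · intro h
      obtain rfl : l = [Block.S2] := by simpa [tilings] using h
      exact ⟨⟨_, _, rfl, Or.inl rfl, isTail_nil⟩, by simp [Block.size]⟩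
    · rintro ⟨⟨b, t, rfl, rfl | rfl, ht⟩, hs⟩
      · have : t ∈ tails 0 := (mem_tails _ _).2 ⟨ht, by simpa [Block.size] using hs⟩
        simpa [tails, tilings] using this
      · simp [Block.size] at hs; omega
  | n + 1 =>
    simp only [tilings, Finset.mem_union, Finset.mem_image, mem_tails]
    constructor
    · rintro (⟨t, ⟨ht, hs⟩, rfl⟩ | ⟨t, ⟨ht, hs⟩, rfl⟩)
      · exact ⟨⟨_, _, rfl, Or.inl rfl, ht⟩, by simp [Block.size, hs]; omega⟩
      · exact ⟨⟨_, _, rfl, Or.inr rfl, ht⟩, by simp [Block.size, hs]; omega⟩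
    · rintro ⟨⟨b, t, rfl, rfl | rfl, ht⟩, hs⟩
      · exact Or.inl ⟨t, ⟨ht, by simp [Block.size] at hs; omega⟩, rfl⟩
      · exact Or.inr ⟨t, ⟨ht, by simp [Block.size] at hs; omega⟩, rfl⟩

lemma sum_tilings (e : ℕ → ℤ) (n : ℕ) :
    ∑ l ∈ tilings n, tilingVal e 1 l = F (n + 3) e := by
  match n with
  | 0 => simp [tilings, tilingVal, blockVal, F]
  | n + 1 =>
    have hd : Disjoint ((tails (n + 1)).image (List.cons Block.S2))
        ((tails n).image (List.cons Block.S1H)) := by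
      rw [Finset.disjoint_left]
      intro l h1 h2
      simp only [Finset.mem_image] at h1 h2
      obtain ⟨x, -, rfl⟩ := h1
      obtain ⟨y, -, h⟩ := h2
      simp at h
    -- the initial block `S₂` or `S₁H` accounts for the two terms of the splitting at index `3`
    rw [show n + 1 + 3 = 1 + 2 + (n + 1) by omega, F_split]
    rw [tilings, Finset.sum_union hd, Finset.sum_image (by simp), Finset.sum_image (by simp)]
    simp only [tilingVal, ← Finset.mul_sum, sum_tails]
    simp only [Block.size, blockVal, F, hVal, Nat.reduceAdd, Nat.reduceSub]
    ring

/-- Expansion theorem for the Kauffman bracket polynomials of 2-bridge Chebyshev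
diagrams `T(3,b)`: for every `b ≥ 3` and all crossing signs, `F_b` equals the sum over
all admissible tilings of the positions `1,…,b-1` of the value of the tiling. -/
theorem kauffman_bracket_two_bridge_tiling_expansion
    (b : ℕ) (hb : 3 ≤ b) (e : ℕ → ℤ) (he : ∀ i, e i = 1 ∨ e i = -1) :
    F b e =
      ∑ᶠ l ∈ {l : List Block | IsAdmissible l ∧ (l.map Block.size).sum = b - 1},
        tilingVal e 1 l := by
  obtain ⟨n, rfl⟩ : ∃ n, b = n + 3 := ⟨b - 3, by omega⟩
  have hset : {l : List Block | IsAdmissible l ∧ (l.map Block.size).sum = n + 3 - 1}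
      = (tilings n : Set (List Block)) := by
    ext l
    exact (mem_tilings n l).symm
  rw [hset, finsum_mem_coe_finset, sum_tilings]

end
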